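/- Let p be an odd prime with p > 3, let m be a primitive root modulo p, define x : ℕ → ℕ by x k = m^k % p, and set q̃ = (p-1)/2. Then the square matrix M of size (q̃ + 1) × (q̃ + 1) over ℚ defined by M (k, j) = x (k + j) for k ∈ {0, ..., q̃ - 1}, j ∈ {0, ..., q̃}, and M (q̃, j) = 1 for all j ∈ {0, ..., q̃}, is invertible (has full rank q̃ + 1). -/

import Mathlib

/-!
Write `q = (p - 1) / 2` and `x_k = m ^ k % p`. Since `m ^ q = -1` modulo `p`, one has
`x_{k+q} = p - x_k`, so `z_k = 2 x_k - p` satisfies `z_{k+q} = -z_k`. If `v` is in the kernel of the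
matrix, the last row gives `∑ v_j = 0`, hence the other rows give `∑_j v_j z_{k+j} = 0` for `k < q`.
Multiplying by `ξ^{-k}` with `ξ ^ q = -1` and summing over `k` yields
`(∑_j v_j ξ^j) · (∑_k ξ^{-k} z_k) = 0`. If the second factor never vanishes, the polynomial
`∑ v_j X^j` of degree at most `q` has as roots `1` and the `q` solutions of `ξ ^ q = -1`, so `v = 0`
(`eq_zero_of_antiperiodic_roots`).

The second factor is `∑_a a χ(a)` for the odd Dirichlet character `χ` modulo `p` with
`χ(m) = ξ⁻¹` (`sum_pow_mul_ne_zero`). Its nonvanishing is the analytic input. On one side,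
`L(0, χ) ≠ 0` by the functional equation and `L(1, χ⁻¹) ≠ 0` (`LFunction_zero_ne_zero_of_odd`). On
the other side, `Γ(s) L(s, χ)` is the Mellin transform of `∑ χ(n) e^{-nt}`, and if `∑_a a χ(a) = 0`
this function is `O(t)` at `0`, which forces `L(0, χ) = 0` (`LFunction_zero_eq_zero`).
-/

open Filter Topology Asymptotics Set Finset

/-! ### Nonvanishing of `L(0, χ)` for odd characters -/

theorem ne_one_of_odd {p : ℕ} {χ : DirichletCharacter ℂ p} (hχ : χ.Odd) : χ ≠ 1 := by
  rintro rfl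
  rw [DirichletCharacter.Odd, MulChar.one_apply (isUnit_one.neg)] at hχ
  norm_num at hχ

/-- The functional equation relates `L(0, χ)` for odd `χ` to `L(1, χ⁻¹)`, which does not vanish by
Dirichlet's theorem; the Archimedean factor at `0` is `Γ_ℝ(1) = 1`. -/
theorem LFunction_zero_ne_zero_of_odd {p : ℕ} [Fact p.Prime] {χ : DirichletCharacter ℂ p}
    (hχ : χ.Odd) : χ.LFunction 0 ≠ 0 := by
  have hp : p.Prime := Fact.out
  have hp1 : p ≠ 1 := hp.ne_one
  have hχ1 : χ ≠ 1 := ne_one_of_odd hχ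
  have hprim : χ.IsPrimitive := by
    rcases (Nat.dvd_prime hp).mp χ.conductor_dvd_level with h | h
    · exact absurd ((DirichletCharacter.eq_one_iff_conductor_eq_one).mpr h) hχ1
    · exact h
  have hroot : χ.rootNumber ≠ 0 := by
    have hg : gaussSum χ ZMod.stdAddChar ≠ 0 :=
      gaussSum_ne_zero_of_nontrivial (by simp [ZMod.card, hp.ne_zero]) hχ1
        (ZMod.isPrimitive_stdAddChar p)
    rw [DirichletCharacter.rootNumber]
    simp only [ne_eq, div_eq_zero_iff, hg, pow_eq_zero_iff', Complex.I_ne_zero, false_and, or_self,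
      Complex.cpow_eq_zero_iff, Nat.cast_eq_zero, hp.ne_zero, not_false_eq_true]
  have hΛ : χ⁻¹.completedLFunction 1 ≠ 0 := by
    intro h
    refine DirichletCharacter.LFunction_apply_one_ne_zero (inv_ne_one.mpr hχ1) ?_
    rw [DirichletCharacter.LFunction_eq_completed_div_gammaFactor _ _ (.inr hp1), h, zero_div]
  have hfe := hprim.completedLFunction_one_sub 1
  rw [DirichletCharacter.LFunction_eq_completed_div_gammaFactor _ _ (.inr hp1),
    hχ.gammaFactor_def, zero_add, Complex.Gammaℝ_one, div_one]
  rw [sub_self] at hfe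
  rw [hfe]
  have : (p : ℂ) ^ ((1 : ℂ) - 1 / 2) ≠ 0 := by
    simp [Complex.cpow_eq_zero_iff, hp.ne_zero]
  exact mul_ne_zero (mul_ne_zero this hroot) hΛ

/-! ### The Mellin transform of `∑ χ(n) e^{-nt}` and the value at zero -/

theorem sum_zmod_eq_sum_range {p : ℕ} [NeZero p] (f : ZMod p → ℂ) :
    ∑ a : ZMod p, f a = ∑ n ∈ range p, f n := by
  symm
  refine Finset.sum_bij' (fun n _ => (n : ZMod p)) (fun a _ => a.val) ?_ ?_ ?_ ?_ ?_
  · simp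
  · intro a _; simpa using a.val_lt
  · intro n hn; simpa using ZMod.val_cast_of_lt (Finset.mem_range.mp hn)
  · intro a _; simp
  · simp

/-- The function `∑_{n ≥ 0} χ(n) e^{-nt}` on `t > 0`, written in closed form by summing over residue
classes modulo `p`. Its Mellin transform is `Γ(s) L(s, χ)`. -/
noncomputable def thetaSum {p : ℕ} (χ : DirichletCharacter ℂ p) (t : ℝ) : ℂ :=
  (∑ n ∈ range p, χ n * Real.exp (-(n : ℝ) * t)) / ((1 - Real.exp (-(p : ℝ) * t) : ℝ) : ℂ)

section
variable {p : ℕ} [NeZero p] (χ : DirichletCharacter ℂ p)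

theorem one_sub_exp_pos {t : ℝ} (ht : 0 < t) : 0 < 1 - Real.exp (-(p : ℝ) * t) := by
  have hp : (0 : ℝ) < p := by exact_mod_cast NeZero.pos p
  have : Real.exp (-(p : ℝ) * t) < 1 := Real.exp_lt_one_iff.2 (by nlinarith)
  linarith

theorem hasSum_thetaSum {t : ℝ} (ht : 0 < t) :
    HasSum (fun n : ℕ => χ n * (Real.exp (-(n : ℝ) * t) : ℂ)) (thetaSum χ t) := by
  have hS : Summable (fun n : ℕ => χ n * (Real.exp (-(n : ℝ) * t) : ℂ)) := by
    have hg : Summable (fun n : ℕ => Real.exp (-t) ^ n) :=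
      summable_geometric_of_lt_one (Real.exp_pos _).le (Real.exp_lt_one_iff.2 (by linarith))
    refine Summable.of_norm_bounded hg fun n => ?_
    rw [norm_mul, Complex.norm_real, Real.norm_of_nonneg (Real.exp_pos _).le, ← Real.exp_nat_mul]
    calc _ ≤ 1 * Real.exp (-(n : ℝ) * t) := by gcongr; exact χ.norm_le_one _
      _ = _ := by rw [one_mul]; ring_nf
  have hshift := hS.sum_add_tsum_nat_add p
  have hq : ∀ n : ℕ, χ ((n + p : ℕ) : ZMod p) * (Real.exp (-((n + p : ℕ) : ℝ) * t) : ℂ) =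
      (Real.exp (-(p : ℝ) * t) : ℂ) * (χ n * (Real.exp (-(n : ℝ) * t) : ℂ)) := by
    intro n
    have h1 : ((n + p : ℕ) : ZMod p) = n := by simp
    have h2 : Real.exp (-((n + p : ℕ) : ℝ) * t) =
        Real.exp (-(p : ℝ) * t) * Real.exp (-(n : ℝ) * t) := by
      rw [← Real.exp_add]; push_cast; ring_nf
    rw [h1, h2]; push_cast; ring
  simp_rw [hq, tsum_mul_left] at hshift
  have hne : ((1 - Real.exp (-(p : ℝ) * t) : ℝ) : ℂ) ≠ 0 :=
    Complex.ofReal_ne_zero.mpr (one_sub_exp_pos ht).ne'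
  have : ∑' n : ℕ, χ n * (Real.exp (-(n : ℝ) * t) : ℂ) = thetaSum χ t := by
    rw [thetaSum, eq_div_iff hne]
    push_cast at hshift ⊢
    linear_combination -hshift
  exact this ▸ hS.hasSum

theorem mellin_thetaSum [Fact (1 < p)] {s : ℂ} (hs : 1 < s.re) :
    mellin (thetaSum χ) s = Complex.Gamma s * χ.LFunction s := by
  have hsum : Summable fun n : ℕ => ‖χ n‖ / (n : ℝ) ^ s.re := by
    refine Summable.of_nonneg_of_le (fun n => by positivity) (fun n => ?_)
      (Real.summable_one_div_nat_rpow.mpr hs)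
    gcongr
    exact χ.norm_le_one _
  have h := hasSum_mellin (a := fun n : ℕ => χ n) (p := fun n => (n : ℝ)) (F := thetaSum χ)
    (s := s) (fun n => by
      rcases Nat.eq_zero_or_pos n with rfl | h
      · left; simpa using χ.map_zero' (Fact.out : 1 < p).ne'
      · right; exact_mod_cast h) (by linarith) (fun t ht => hasSum_thetaSum χ ht) hsum
  rw [DirichletCharacter.LFunction_eq_LSeries _ hs, LSeries, ← tsum_mul_left, ← h.tsum_eq]
  refine tsum_congr fun n => ?_
  rcases Nat.eq_zero_or_pos n with rfl | h
  · simp [χ.map_zero' (Fact.out : 1 < p).ne']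
  · rw [LSeries.term_of_ne_zero h.ne']; simp [mul_div_assoc]

theorem continuousOn_thetaSum : ContinuousOn (thetaSum χ) (Ioi 0) := by
  unfold thetaSum
  refine ContinuousOn.div (by fun_prop) (by fun_prop) fun t ht => ?_
  exact Complex.ofReal_ne_zero.mpr (one_sub_exp_pos ht).ne'

theorem thetaSum_isBigO_atTop [Fact (1 < p)] :
    thetaSum χ =O[atTop] fun t => Real.exp (-1 * t) := by
  have hpos : 0 < 1 - Real.exp (-(p : ℝ) * 1) := one_sub_exp_pos one_pos
  refine IsBigO.of_bound (p / (1 - Real.exp (-(p : ℝ) * 1))) ?_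
  filter_upwards [eventually_ge_atTop 1] with t ht
  have hden : 1 - Real.exp (-(p : ℝ) * 1) ≤ 1 - Real.exp (-(p : ℝ) * t) := by
    have : Real.exp (-(p : ℝ) * t) ≤ Real.exp (-(p : ℝ) * 1) := by
      apply Real.exp_le_exp.mpr
      have : (0 : ℝ) ≤ p := by positivity
      nlinarith
    linarith
  have hnum : ‖∑ n ∈ range p, χ n * (Real.exp (-(n : ℝ) * t) : ℂ)‖ ≤ p * Real.exp (-1 * t) := by
    refine (norm_sum_le_of_le (f := fun n : ℕ => χ n * (Real.exp (-(n : ℝ) * t) : ℂ))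
      (n := fun _ => Real.exp (-1 * t)) _ fun n _ => ?_).trans (by simp)
    rcases Nat.eq_zero_or_pos n with rfl | h
    · simp [χ.map_zero' (Fact.out : 1 < p).ne', Real.exp_nonneg]
    · rw [norm_mul, Complex.norm_real, Real.norm_of_nonneg (Real.exp_pos _).le]
      have h1 : (1 : ℝ) ≤ n := by exact_mod_cast h
      calc _ ≤ 1 * Real.exp (-(n : ℝ) * t) := by gcongr; exact χ.norm_le_one _
        _ ≤ Real.exp (-1 * t) := by
          rw [one_mul]; apply Real.exp_le_exp.mpr; nlinarith
  rw [thetaSum, norm_div, Complex.norm_real, Real.norm_of_nonneg (hpos.le.trans hden),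
    Real.norm_of_nonneg (Real.exp_pos _).le, div_mul_eq_mul_div]
  gcongr

/-- If the zeroth and first moments of `χ` over `{0, …, p - 1}` vanish, the numerator of `thetaSum χ`
vanishes to second order at `0` while its denominator vanishes only to first order. -/
theorem thetaSum_isBigO_zero (h0 : ∑ n ∈ range p, χ n = 0) (h1 : ∑ n ∈ range p, χ n * n = 0) :
    thetaSum χ =O[𝓝[>] 0] fun t : ℝ => t ^ (-(-1) : ℝ) := by
  have hp : (1 : ℝ) ≤ p := by exact_mod_cast NeZero.pos p
  refine IsBigO.of_bound (2 * p ^ 2) ?_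
  have hδ : (0 : ℝ) < 1 / (2 * p) := by positivity
  filter_upwards [Ioo_mem_nhdsGT hδ] with t ht
  obtain ⟨ht0, ht1⟩ := ht
  have hpt : p * t ≤ 1 / 2 := by
    rw [lt_div_iff₀ (by positivity)] at ht1; linarith
  have hexp : ∀ n : ℕ, n ≤ p → |Real.exp (-(n : ℝ) * t) - 1 - (-(n : ℝ) * t)| ≤ (p * t) ^ 2 := by
    intro n hn
    have hn' : (n : ℝ) ≤ p := by exact_mod_cast hn
    have hnt : n * t ≤ p * t := by gcongr
    have hnt0 : 0 ≤ n * t := by positivity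
    refine (Real.abs_exp_sub_one_sub_id_le ?_).trans ?_
    · rw [neg_mul, abs_neg, abs_of_nonneg hnt0]; linarith
    · rw [neg_mul, neg_sq]; gcongr
  have hden : p * t / 2 ≤ 1 - Real.exp (-(p : ℝ) * t) := by
    have := (abs_le.mp (hexp p le_rfl)).2
    nlinarith [mul_pos (by linarith : (0 : ℝ) < p) ht0]
  have hnum : ‖∑ n ∈ range p, χ n * (Real.exp (-(n : ℝ) * t) : ℂ)‖ ≤ p * (p * t) ^ 2 := by
    have hrw : ∑ n ∈ range p, χ n * (Real.exp (-(n : ℝ) * t) : ℂ) =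
        ∑ n ∈ range p, χ n * ((Real.exp (-(n : ℝ) * t) - 1 - (-(n : ℝ) * t) : ℝ) : ℂ) := by
      have : ∀ n : ℕ, χ n * ((Real.exp (-(n : ℝ) * t) - 1 - (-(n : ℝ) * t) : ℝ) : ℂ) =
          χ n * (Real.exp (-(n : ℝ) * t) : ℂ) - χ n + (χ n * n) * t := by
        intro n; push_cast; ring
      simp_rw [this, sum_add_distrib, sum_sub_distrib, ← sum_mul, h0, h1]
      simp
    rw [hrw]
    refine (norm_sum_le_of_le (n := fun _ => (p * t) ^ 2) _ fun n hn => ?_).trans (by simp)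
    rw [norm_mul, Complex.norm_real, Real.norm_eq_abs, ← one_mul ((p * t) ^ 2)]
    gcongr
    · exact χ.norm_le_one _
    · exact hexp n (Finset.mem_range.mp hn).le
  have hptpos : 0 < p * t / 2 := by positivity
  rw [thetaSum, norm_div, Complex.norm_real, Real.norm_of_nonneg (hptpos.le.trans hden),
    neg_neg, Real.rpow_one, Real.norm_of_nonneg ht0.le]
  calc _ ≤ p * (p * t) ^ 2 / (p * t / 2) := by gcongr
    _ = 2 * p ^ 2 * t := by field_simp

/-- Half of the formula `L(0, χ) = -(1/p) ∑ n χ(n)`: if the first moment vanishes then so does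
`L(0, χ)`. In that case the Mellin transform of `thetaSum χ` is holomorphic on `Re s > -1`, so
`L(s, χ) = mellin (thetaSum χ) s / Γ(s)` extends to that half-plane, and `1/Γ` vanishes at `0`. -/
theorem LFunction_zero_eq_zero [Fact (1 < p)] (hχ : χ ≠ 1)
    (h1 : ∑ n ∈ range p, χ n * n = 0) : χ.LFunction 0 = 0 := by
  have h0 : ∑ n ∈ range p, χ n = 0 := by
    rw [← sum_zmod_eq_sum_range (fun a => χ a)]; exact χ.sum_eq_zero_of_ne_one hχ
  let U : Set ℂ := {s | -1 < s.re}
  have hUo : IsOpen U := isOpen_lt continuous_const Complex.continuous_re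
  have hUc : IsPreconnected U := (convex_halfSpace_re_gt (-1)).isPreconnected
  have hf : AnalyticOnNhd ℂ χ.LFunction U :=
    (DirichletCharacter.differentiable_LFunction hχ).differentiableOn.analyticOnNhd hUo
  have hg : AnalyticOnNhd ℂ (fun s => mellin (thetaSum χ) s * (Complex.Gamma s)⁻¹) U := by
    refine DifferentiableOn.analyticOnNhd (fun s hs => ?_) hUo
    refine DifferentiableAt.differentiableWithinAt ?_
    refine DifferentiableAt.mul ?_ (Complex.differentiable_one_div_Gamma s)
    exact mellin_differentiableAt_of_isBigO_rpow_exp one_pos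
      ((continuousOn_thetaSum χ).locallyIntegrableOn measurableSet_Ioi)
      (thetaSum_isBigO_atTop χ) (thetaSum_isBigO_zero χ h0 h1) hs
  have heq : χ.LFunction =ᶠ[𝓝 2] fun s => mellin (thetaSum χ) s * (Complex.Gamma s)⁻¹ := by
    have : {s : ℂ | 1 < s.re} ∈ 𝓝 (2 : ℂ) :=
      (isOpen_lt continuous_const Complex.continuous_re).mem_nhds (by simp)
    filter_upwards [this] with s hs
    have hG : Complex.Gamma s ≠ 0 :=
      Complex.Gamma_ne_zero_of_re_pos (by have : 1 < s.re := hs; linarith)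
    rw [mellin_thetaSum χ hs]; field_simp
  have := hf.eqOn_of_preconnected_of_eventuallyEq hg hUc (show (2 : ℂ) ∈ U by simp [U]; norm_num) heq
    (show (0 : ℂ) ∈ U by simp [U])
  -- `Complex.Gamma 0 = 0` by convention, so the inverse has the correct value `0` of `1/Γ` there.
  simpa [Complex.Gamma_zero] using this
end

/-! ### First moments of odd characters and the orbit of `m` -/

theorem sum_mul_val_ne_zero {p : ℕ} [Fact p.Prime] {χ : DirichletCharacter ℂ p} (hχ : χ.Odd) :
    ∑ a : ZMod p, χ a * (a.val : ℂ) ≠ 0 := by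
  have : Fact (1 < p) := ⟨(Fact.out : p.Prime).one_lt⟩
  intro h
  refine LFunction_zero_ne_zero_of_odd hχ (LFunction_zero_eq_zero χ (ne_one_of_odd hχ) ?_)
  rw [sum_zmod_eq_sum_range] at h
  rw [← h]
  refine sum_congr rfl fun n hn => ?_
  rw [ZMod.val_cast_of_lt (mem_range.mp hn)]

theorem pow_half_eq_neg_one {p m : ℕ} [Fact p.Prime] (hm : orderOf (m : ZMod p) = p - 1)
    {q : ℕ} (hq : p - 1 = 2 * q) (hq0 : 0 < q) :
    (m : ZMod p) ^ q = -1 := by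
  have h1 : ((m : ZMod p) ^ q) ^ 2 = 1 := by
    rw [← pow_mul, mul_comm, ← hq, ← hm, pow_orderOf_eq_one]
  rw [sq, mul_self_eq_one_iff] at h1
  exact h1.resolve_left (pow_ne_one_of_lt_orderOf hq0.ne' (by omega))

/-- The discrete Fourier coefficients of the orbit `m ^ k % p` at the odd frequencies are the first
moments of the odd characters `χ`, where `χ` is determined by `χ(m) = ζ`; hence they are nonzero. -/
theorem sum_pow_mul_ne_zero {p m : ℕ} [Fact p.Prime] (hm : orderOf (m : ZMod p) = p - 1)
    {q : ℕ} (hq : p - 1 = 2 * q) (hq0 : 0 < q) {ζ : ℂ}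
    (hζ : ζ ^ q = -1) : ∑ k ∈ range (2 * q), ζ ^ k * ((m ^ k % p : ℕ) : ℂ) ≠ 0 := by
  have hpr : p.Prime := Fact.out
  have hfin : IsOfFinOrder (m : ZMod p) := orderOf_pos_iff.mp (by omega)
  have hm0 : (m : ZMod p) ≠ 0 := hfin.isUnit.ne_zero
  have hζ0 : ζ ≠ 0 := by
    rintro rfl
    rw [zero_pow hq0.ne'] at hζ
    norm_num at hζ
  let g : (ZMod p)ˣ := Units.mk0 (m : ZMod p) hm0
  have hgo : orderOf g = p - 1 := by rw [← orderOf_units]; exact hm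
  have hg : ∀ x, x ∈ Subgroup.zpowers g := by
    have htop : Subgroup.zpowers g = ⊤ := by
      refine Subgroup.eq_top_of_card_eq _ ?_
      rw [Nat.card_zpowers, hgo, Nat.card_eq_fintype_card, ZMod.card_units]
    simp [htop]
  have hζ1 : Units.mk0 ζ hζ0 ∈ rootsOfUnity (Fintype.card (ZMod p)ˣ) ℂ := by
    rw [mem_rootsOfUnity, ZMod.card_units, hq]
    ext
    push_cast
    rw [Units.val_mk0, mul_comm, pow_mul, hζ]; norm_num
  let χ : DirichletCharacter ℂ p := MulChar.ofRootOfUnity hζ1 hg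
  have hχm : χ (m : ZMod p) = ζ := MulChar.ofRootOfUnity_spec hζ1 hg
  have hodd : χ.Odd := by
    rw [DirichletCharacter.Odd, ← pow_half_eq_neg_one hm hq hq0, map_pow, hχm, hζ]
  have key : ∑ a : ZMod p, χ a * (a.val : ℂ) =
      ∑ k ∈ range (2 * q), ζ ^ k * ((m ^ k % p : ℕ) : ℂ) := by
    rw [← Finset.sum_subset (s₁ := univ.erase 0) (erase_subset _ _)
      (fun a _ ha => by
        have : a = 0 := by simpa using ha
        simp [this])]
    symm
    refine Finset.sum_bij (fun k _ => (m : ZMod p) ^ k) ?_ ?_ ?_ ?_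
    · intro k _; simpa using fun h => absurd h hm0
    · intro a ha b hb hab
      rw [Finset.mem_range, ← hq, ← hm] at ha hb
      exact pow_injOn_Iio_orderOf ha hb hab
    · intro b hb
      have hb0 : b ≠ 0 := (mem_erase.mp hb).1
      have hmem : Units.mk0 b hb0 ∈ Submonoid.powers g := by
        rw [mem_powers_iff_mem_zpowers]; exact hg _
      obtain ⟨k, hk⟩ := hmem
      refine ⟨k % (2 * q), mem_range.mpr (Nat.mod_lt _ (by omega)), ?_⟩
      rw [← hq, ← hm, pow_mod_orderOf]
      simpa [g] using congrArg Units.val hk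
    · intro k _
      rw [map_pow, hχm, ← Nat.cast_pow, ZMod.val_natCast]
  rw [← key]
  exact sum_mul_val_ne_zero hodd

/-- Since `m ^ q = -1`, shifting by half a period replaces a residue `x` by `p - x`. -/
theorem orbit_add_half {p m : ℕ} [Fact p.Prime] (hm : orderOf (m : ZMod p) = p - 1)
    {q : ℕ} (hq : p - 1 = 2 * q) (hq0 : 0 < q) (k : ℕ) :
    m ^ (k + q) % p + m ^ k % p = p := by
  have hpr : p.Prime := Fact.out
  have hfin : IsOfFinOrder (m : ZMod p) := orderOf_pos_iff.mp (by omega)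
  have hm0 : (m : ZMod p) ^ k ≠ 0 := pow_ne_zero _ hfin.isUnit.ne_zero
  have : NeZero ((m : ZMod p) ^ k) := ⟨hm0⟩
  have h := ZMod.val_neg_of_ne_zero ((m : ZMod p) ^ k)
  have hv := ZMod.val_lt ((m : ZMod p) ^ k)
  have e : -(m : ZMod p) ^ k = (m : ZMod p) ^ (k + q) := by
    rw [pow_add, pow_half_eq_neg_one hm hq hq0]; ring
  rw [e] at h
  rw [← Nat.cast_pow, ← Nat.cast_pow, ZMod.val_natCast, ZMod.val_natCast] at h
  have := Nat.mod_lt (m ^ k) hpr.pos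
  omega

/-! ### The kernel of the matrix -/

/-- A sum over a full period of a `q`-periodic sequence does not depend on the starting point. -/
theorem sum_range_shift {q : ℕ} {f : ℕ → ℂ} (hf : ∀ k, f (k + q) = f k) (j : ℕ) :
    ∑ k ∈ range q, f (k + j) = ∑ k ∈ range q, f k := by
  induction j with
  | zero => rfl
  | succ j ih =>
    rw [← ih]
    have h1 := sum_range_succ (fun k => f (k + j)) q
    have h2 := sum_range_succ' (fun k => f (k + j)) q
    have h3 := hf j
    simp only [add_comm q j, zero_add, h3] at h1 h2
    have h4 : ∀ k, f (k + (j + 1)) = f (k + 1 + j) := fun k => by congr 1; ring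
    simp_rw [h4]
    exact add_right_cancel (h2.symm.trans h1)

/-- A polynomial of degree at most `q` (with coefficient vector `w`) that vanishes at `1` and at the
`q` solutions of `ξ ^ q = -1` is zero. -/
theorem eq_zero_of_antiperiodic_roots {q : ℕ} (hq0 : 0 < q) (w : Fin (q + 1) → ℂ)
    (h1 : ∑ j, w j = 0) (hroot : ∀ ξ : ℂ, ξ ^ q = -1 → ∑ j : Fin (q + 1), ξ ^ (j : ℕ) * w j = 0) :
    w = 0 := by
  obtain ⟨η, hη⟩ : ∃ η : ℂ, IsPrimitiveRoot η (2 * q) :=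
    ⟨_, Complex.isPrimitiveRoot_exp (2 * q) (by omega)⟩
  have hηq : η ^ q = -1 := by
    have hsq : (η ^ q) ^ 2 = 1 := by rw [← pow_mul, mul_comm, hη.pow_eq_one]
    rw [sq, mul_self_eq_one_iff] at hsq
    exact hsq.resolve_left (hη.pow_ne_one_of_pos_of_lt hq0.ne' (by omega))
  -- The nodes are the odd powers of `η`, together with `η ^ 0 = 1` at the last index.
  let e : Fin (q + 1) → ℕ := fun i => if (i : ℕ) < q then 2 * i + 1 else 0
  have he : ∀ i, e i < 2 * q := fun i => by simp only [e]; split_ifs <;> omega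
  refine Matrix.eq_zero_of_forall_index_sum_pow_mul_eq_zero (f := fun i => η ^ e i) ?_ ?_
  · intro a b hab
    have := hη.pow_inj (he a) (he b) hab
    have ha := a.isLt
    have hb := b.isLt
    ext
    simp only [e] at this
    split_ifs at this <;> omega
  · intro i
    by_cases hi : (i : ℕ) < q
    · apply hroot
      simp only [e, if_pos hi]
      rw [← pow_mul, mul_comm, pow_mul, hηq, pow_add, pow_mul]; norm_num
    · simpa [e, hi] using h1

/-- For `p` an odd prime with `p > 3`, `m` a primitive root modulo `p`,
`x k = m ^ k % p`, and `q̃ = (p-1)/2`: the `(q̃+1) × (q̃+1)` rational matrix whose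
first `q̃` rows are `(x (k + j))_j` for `k = 0, ..., q̃ - 1` and whose last row
consists of ones is invertible (has full rank `q̃ + 1`). -/
theorem dh_hankel_matrix_invertible (p m : ℕ) (hp : p.Prime) (hp3 : 3 < p)
    (hm : orderOf (m : ZMod p) = p - 1) :
    IsUnit (Matrix.of (fun k j : Fin ((p - 1) / 2 + 1) =>
      if (k : ℕ) = (p - 1) / 2 then (1 : ℚ)
      else ((m ^ ((k : ℕ) + (j : ℕ)) % p : ℕ) : ℚ))) := by
  have : Fact p.Prime := ⟨hp⟩
  obtain ⟨q, hq⟩ : ∃ q, p - 1 = 2 * q := by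
    obtain ⟨r, hr⟩ := hp.odd_of_ne_two (by omega)
    exact ⟨r, by omega⟩
  have hhalf : (p - 1) / 2 = q := by omega
  have hq0 : 0 < q := by omega
  rw [hhalf]
  rw [← Matrix.mulVec_injective_iff_isUnit, ← Matrix.coe_mulVecLin, injective_iff_map_eq_zero]
  intro v hv
  rw [Matrix.mulVecLin_apply] at hv
  have hsum : ∑ j, (v j : ℂ) = 0 := by
    have := congrFun hv (Fin.last q)
    simp only [Matrix.mulVec, dotProduct, Matrix.of_apply, Fin.val_last, if_true, one_mul,
      Pi.zero_apply] at this
    exact_mod_cast this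
  have hrow : ∀ k < q, ∑ j : Fin (q + 1), ((m ^ (k + (j : ℕ)) % p : ℕ) : ℂ) * (v j : ℂ) = 0 := by
    intro k hk
    have := congrFun hv ⟨k, by omega⟩
    simp only [Matrix.mulVec, dotProduct, Matrix.of_apply, if_neg hk.ne, Pi.zero_apply] at this
    exact_mod_cast this
  -- The recentred orbit `2 x_k - p` is antiperiodic: it changes sign under a shift by `q`.
  let z : ℕ → ℂ := fun k => 2 * ((m ^ k % p : ℕ) : ℂ) - p
  have hz : ∀ k, z (k + q) = -z k := by
    intro k
    have : ((m ^ (k + q) % p : ℕ) : ℂ) + ((m ^ k % p : ℕ) : ℂ) = p := by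
      exact_mod_cast orbit_add_half hm hq hq0 k
    simp only [z]
    linear_combination 2 * this
  have hzrow : ∀ k < q, ∑ j : Fin (q + 1), z (k + j) * (v j : ℂ) = 0 := by
    intro k hk
    simp only [z, sub_mul, sum_sub_distrib, mul_assoc, ← mul_sum, hrow k hk, hsum]
    simp
  have hw : (fun j => (v j : ℂ)) = 0 := by
    refine eq_zero_of_antiperiodic_roots hq0 _ hsum fun ξ hξ => ?_
    have hξ0 : ξ ≠ 0 := by
      rintro rfl
      rw [zero_pow hq0.ne'] at hξ
      norm_num at hξ
    have hζ : (ξ⁻¹) ^ q = -1 := by rw [inv_pow, hξ]; norm_num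
    have hf : ∀ k, (ξ⁻¹) ^ (k + q) * z (k + q) = (ξ⁻¹) ^ k * z k := by
      intro k; rw [hz, pow_add, hζ]; ring
    -- Over two half-periods, the contributions of `x_k` and `x_{k+q} = p - x_k` combine to `z k`.
    have hS : ∑ k ∈ range q, (ξ⁻¹) ^ k * z k ≠ 0 := by
      have h := sum_pow_mul_ne_zero hm hq hq0 hζ
      rw [two_mul, sum_range_add, ← sum_add_distrib] at h
      convert h using 2 with k
      have : ((m ^ (k + q) % p : ℕ) : ℂ) + ((m ^ k % p : ℕ) : ℂ) = p := by
        exact_mod_cast orbit_add_half hm hq hq0 k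
      rw [add_comm q k, pow_add, hζ]
      simp only [z]
      linear_combination (ξ⁻¹) ^ k * this
    -- Taking the Fourier coefficient of the relations `hzrow` turns the correlation into a product.
    have hdouble : (∑ j : Fin (q + 1), ξ ^ (j : ℕ) * (v j : ℂ)) * ∑ k ∈ range q, (ξ⁻¹) ^ k * z k
        = 0 := by
      calc _ = ∑ j : Fin (q + 1), ∑ k ∈ range q, (ξ⁻¹) ^ k * (z (k + j) * (v j : ℂ)) := by
            rw [sum_mul]
            refine sum_congr rfl fun j _ => ?_
            rw [← sum_range_shift hf (j : ℕ), mul_sum]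
            refine sum_congr rfl fun k _ => ?_
            have : ξ ^ (j : ℕ) * (ξ⁻¹) ^ (j : ℕ) = 1 := by
              rw [← mul_pow, mul_inv_cancel₀ hξ0, one_pow]
            rw [pow_add]
            linear_combination (ξ⁻¹) ^ k * z (k + j) * (v j : ℂ) * this
        _ = 0 := by
            rw [sum_comm]
            refine sum_eq_zero fun k hk => ?_
            rw [← mul_sum, hzrow k (mem_range.mp hk), mul_zero]
    exact (mul_eq_zero.mp hdouble).resolve_right hS
  funext j
  simpa using congrFun hw j
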